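/- Let 0 < α < 1, let ρ₀, g, ħ₁, ħ₂ ∈ ℝ, let a < b be reals and let ψ : [a,b] → ℝ be continuously differentiable, strictly increasing with ψ' > 0. With initial guesses u_0(x,y,t) = −sin(x+y) and v_0(x,y,t) = sin(x+y), define the first HAM iterates by u_1(x,y,t) = ħ₁·I^{α,ψ}_a[ u_0·∂u_0/∂x + v_0·∂u_0/∂y − ρ₀(∂²u_0/∂x² + ∂²u_0/∂y²) − g ](t) and v_1(x,y,t) = ħ₂·I^{α,ψ}_a[ u_0·∂v_0/∂x + v_0·∂v_0/∂y − ρ₀(∂²v_0/∂x² + ∂²v_0/∂y²) + g ](t). Then for all x, y and t ∈ [a,b]: u_1(x,y,t) = −2ħ₁ρ₀·sin(x+y)·(ψ(t) − ψ(a))^α/Γ(α+1) − ħ₁·g·(ψ(t) − ψ(a))^α/Γ(α+1), and v_1(x,y,t) = 2ħ₂ρ₀·sin(x+y)·(ψ(t) − ψ(a))^α/Γ(α+1) + ħ₂·g·(ψ(t) − ψ(a))^α/Γ(α+1). -/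

import Mathlib

/-!
For the initial guesses the convective terms cancel, because `u₀ = -v₀` and both depend on `x + y`
only, while the Laplacian of `sin (x + y)` is `-2 sin (x + y)`. The function being integrated is
therefore constant in time, and only the ψ-fractional integral of a constant is needed
(`psiFracInt_const`). It follows from the fundamental theorem of calculus applied to the primitive
`τ ↦ -(ψ t - ψ τ) ^ α / α`; the kernel is singular at `τ = t`, but it is the nonnegative derivative
of a function continuous up to the endpoint, hence integrable.
-/

open Real MeasureTheory intervalIntegral

/-- The ψ-fractional integral of order `α` with base point `a` of a function `f`. -/
noncomputable def psiFracInt (α a : ℝ) (ψ f : ℝ → ℝ) (t : ℝ) : ℝ :=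
  (1 / Real.Gamma α) * ∫ τ in a..t, deriv ψ τ * (ψ t - ψ τ) ^ (α - 1) * f τ

/-- The kernel of the ψ-fractional integral has total mass `(ψ t - ψ a) ^ α / α`. -/
lemma integral_psi_kernel {α a b : ℝ} (hα₀ : 0 < α) {ψ : ℝ → ℝ}
    (hcont : ContinuousOn ψ (Set.Icc a b)) (hψmono : StrictMonoOn ψ (Set.Icc a b))
    (hψ' : ∀ x ∈ Set.Icc a b, 0 < deriv ψ x) {t : ℝ} (ht : t ∈ Set.Icc a b) :
    ∫ τ in a..t, deriv ψ τ * (ψ t - ψ τ) ^ (α - 1) = (ψ t - ψ a) ^ α / α := by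
  have hsub : Set.Icc a t ⊆ Set.Icc a b := Set.Icc_subset_Icc_right ht.2
  have hpos : ∀ τ ∈ Set.Ioo a t, 0 < ψ t - ψ τ := fun τ hτ =>
    sub_pos.2 (hψmono (hsub (Set.Ioo_subset_Icc_self hτ)) ht hτ.2)
  have hG : ContinuousOn (fun τ => -((ψ t - ψ τ) ^ α / α)) (Set.Icc a t) :=
    (((continuousOn_const.sub (hcont.mono hsub)).rpow_const
      fun _ _ => Or.inr hα₀.le).div_const α).neg
  have hderiv : ∀ τ ∈ Set.Ioo a t, HasDerivAt (fun τ => -((ψ t - ψ τ) ^ α / α))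
      (deriv ψ τ * (ψ t - ψ τ) ^ (α - 1)) τ := by
    intro τ hτ
    -- `deriv ψ τ` is nonzero, so it is not a junk value and `ψ` is differentiable at `τ`.
    have hd : HasDerivAt ψ (deriv ψ τ) τ :=
      (differentiableAt_of_deriv_ne_zero
        (hψ' τ (hsub (Set.Ioo_subset_Icc_self hτ))).ne').hasDerivAt
    have h := (((hd.const_sub (ψ t)).rpow_const (p := α)
      (Or.inl (hpos τ hτ).ne')).div_const α).neg
    refine h.congr_deriv ?_
    field_simp
  have hint : IntervalIntegrable (fun τ => deriv ψ τ * (ψ t - ψ τ) ^ (α - 1)) volume a t := by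
    rw [intervalIntegrable_iff_integrableOn_Ioc_of_le ht.1]
    exact integrableOn_deriv_of_nonneg hG hderiv fun τ hτ =>
      mul_nonneg (hψ' τ (hsub (Set.Ioo_subset_Icc_self hτ))).le (rpow_nonneg (hpos τ hτ).le _)
  rw [integral_eq_sub_of_hasDerivAt_of_le ht.1 hG hderiv hint]
  simp [zero_rpow hα₀.ne']

lemma psiFracInt_const {α a b : ℝ} (hα₀ : 0 < α) {ψ : ℝ → ℝ}
    (hcont : ContinuousOn ψ (Set.Icc a b)) (hψmono : StrictMonoOn ψ (Set.Icc a b))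
    (hψ' : ∀ x ∈ Set.Icc a b, 0 < deriv ψ x) {t : ℝ} (ht : t ∈ Set.Icc a b) (c : ℝ) :
    psiFracInt α a ψ (fun _ => c) t = c * (ψ t - ψ a) ^ α / Real.Gamma (α + 1) := by
  have hΓ := (Real.Gamma_pos_of_pos hα₀).ne'
  rw [psiFracInt, intervalIntegral.integral_mul_const,
    integral_psi_kernel hα₀ hcont hψmono hψ' ht, Real.Gamma_add_one hα₀.ne']
  field_simp

lemma deriv_sin_add_const (y : ℝ) :
    deriv (fun x => Real.sin (x + y)) = fun x => Real.cos (x + y) := by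
  ext x
  simp

lemma deriv_cos_add_const (y : ℝ) :
    deriv (fun x => Real.cos (x + y)) = fun x => -Real.sin (x + y) := by
  ext x
  simp

lemma deriv_sin_const_add (x : ℝ) :
    deriv (fun y => Real.sin (x + y)) = fun y => Real.cos (x + y) := by
  simpa only [add_comm] using deriv_sin_add_const x

lemma deriv_cos_const_add (x : ℝ) :
    deriv (fun y => Real.cos (x + y)) = fun y => -Real.sin (x + y) := by
  simpa only [add_comm] using deriv_cos_add_const x

theorem ham_first_iterates_cartesian (α ρ₀ g ℏ₁ ℏ₂ a b : ℝ)
    (hα₀ : 0 < α) (hα₁ : α < 1) (hab : a < b)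
    (ψ : ℝ → ℝ) (hψC1 : ContDiffOn ℝ 1 ψ (Set.Icc a b))
    (hψmono : StrictMonoOn ψ (Set.Icc a b))
    (hψ' : ∀ x ∈ Set.Icc a b, 0 < deriv ψ x)
    (u₀ v₀ u₁ v₁ : ℝ → ℝ → ℝ → ℝ)
    (hu₀ : ∀ x y t, u₀ x y t = -Real.sin (x + y))
    (hv₀ : ∀ x y t, v₀ x y t = Real.sin (x + y))
    (hu₁ : ∀ x y t, u₁ x y t = ℏ₁ * psiFracInt α a ψ (fun τ =>
      u₀ x y τ * deriv (fun x' => u₀ x' y τ) x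
        + v₀ x y τ * deriv (fun y' => u₀ x y' τ) y
        - ρ₀ * (deriv (deriv (fun x' => u₀ x' y τ)) x
          + deriv (deriv (fun y' => u₀ x y' τ)) y) - g) t)
    (hv₁ : ∀ x y t, v₁ x y t = ℏ₂ * psiFracInt α a ψ (fun τ =>
      u₀ x y τ * deriv (fun x' => v₀ x' y τ) x
        + v₀ x y τ * deriv (fun y' => v₀ x y' τ) y
        - ρ₀ * (deriv (deriv (fun x' => v₀ x' y τ)) x
          + deriv (deriv (fun y' => v₀ x y' τ)) y) + g) t) :
    ∀ x y : ℝ, ∀ t ∈ Set.Icc a b,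
      (u₁ x y t = -2 * ℏ₁ * ρ₀ * Real.sin (x + y) * (ψ t - ψ a) ^ α / Real.Gamma (α + 1)
        - ℏ₁ * g * (ψ t - ψ a) ^ α / Real.Gamma (α + 1)) ∧
      (v₁ x y t = 2 * ℏ₂ * ρ₀ * Real.sin (x + y) * (ψ t - ψ a) ^ α / Real.Gamma (α + 1)
        + ℏ₂ * g * (ψ t - ψ a) ^ α / Real.Gamma (α + 1)) := by
  intro x y t ht
  have key := psiFracInt_const hα₀ hψC1.continuousOn hψmono hψ' ht
  constructor
  · rw [hu₁]
    simp only [hu₀, hv₀, deriv.fun_neg', deriv_sin_add_const, deriv_cos_add_const,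
      deriv_sin_const_add, deriv_cos_const_add]
    rw [key]
    ring
  · rw [hv₁]
    simp only [hu₀, hv₀, deriv_sin_add_const, deriv_cos_add_const,
      deriv_sin_const_add, deriv_cos_const_add]
    rw [key]
    ring
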